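/- Let μ be a Borel probability measure on Θ and define p : C(X,ℝ) → ℝ by p(φ) = P(exp φ). Then p is a convex functional: for all φ₁, φ₂ ∈ C(X,ℝ) and all t ∈ [0,1], p(t·φ₁ + (1−t)·φ₂) ≤ t·p(φ₁) + (1−t)·p(φ₂). -/

import Mathlib

/-!
Substituting `g = exp u`, the integrand `log (B_{exp φ}(g) / g)` becomes
`log ∫ exp ((φ + u) ∘ τ_θ) dμ(θ) - u`. Since `f ↦ log ∫ exp f` is convex, this is jointly convex in
`(φ, u)`, and so is its integral against any `ν`. Minimising a jointly convex function over `u`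
preserves convexity, and so does the supremum over holonomic measures. An infimum could be `-∞`,
which `⨅` in `ℝ` replaces by `0`; but a jointly convex real-valued function whose infimum along `u`
is `-∞` for one `φ` has infimum `-∞` for every `φ`, so the replacement does not affect convexity.
-/

open MeasureTheory Filter Topology

variable {X Θ : Type*}

/-- A Borel probability measure on `X × Θ` is holonomic (w.r.t. `τ`) if
`∫ (f(τ_θ(x)) − f(x)) dν̂(x,θ) = 0` for every `f ∈ C(X,ℝ)`. -/
def Holonomic [MeasurableSpace X] [MeasurableSpace Θ] [TopologicalSpace X]
    (τ : Θ → X → X) (μhat : Measure (X × Θ)) : Prop :=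
  ∀ f : C(X, ℝ), ∫ p : X × Θ, (f (τ p.2 p.1) - f p.1) ∂μhat = 0

/-- The variational entropy `h_v(ν) = inf { ∫ log(B_μ(g)/g) dν : g ∈ C(X,ℝ), g > 0 }`,
where `B_μ(g)(x) = ∫_Θ g(τ_θ(x)) dμ(θ)`. -/
noncomputable def varEntropy [MeasurableSpace X] [MeasurableSpace Θ]
    [TopologicalSpace X] [TopologicalSpace Θ]
    (τ : Θ → X → X) (μ : Measure Θ) (ν : Measure X) : ℝ :=
  sInf {r : ℝ | ∃ g : C(X, ℝ), (∀ x, 0 < g x) ∧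
    r = ∫ x, Real.log ((∫ θ, g (τ θ x) ∂μ) / g x) ∂ν}

/-- The topological pressure of `ψ` w.r.t. the a-priori measure `μ`:
`P(ψ) = sup_{ν̂ holonomic} inf_{g > 0} ∫ log(B_ψ(g)/g) dν`, where
`B_ψ(g)(x) = ∫_Θ g(τ_θ(x)) ψ(τ_θ(x)) dμ(θ)` and `ν` is the `X`-marginal of `ν̂`. -/
noncomputable def pressure [MeasurableSpace X] [MeasurableSpace Θ]
    [TopologicalSpace X] [TopologicalSpace Θ]
    (τ : Θ → X → X) (μ : Measure Θ) (ψ : X → ℝ) : ℝ :=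
  sSup {r : ℝ | ∃ νhat : Measure (X × Θ), IsProbabilityMeasure νhat ∧ Holonomic τ νhat ∧
    r = sInf {s : ℝ | ∃ g : C(X, ℝ), (∀ x, 0 < g x) ∧
      s = ∫ x, Real.log ((∫ θ, g (τ θ x) * ψ (τ θ x) ∂μ) / g x) ∂(νhat.map Prod.fst)}}

section PartialInfimum

variable {E F : Type*} [AddCommGroup E] [Module ℝ E] [AddCommMonoid F] [Module ℝ F]
  {f : E × F → ℝ}

theorem bddBelow_range_prodMk_of_convexOn (hf : ConvexOn ℝ Set.univ f) {x₀ : E}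
    (h₀ : BddBelow (Set.range fun y => f (x₀, y))) (x : E) :
    BddBelow (Set.range fun y => f (x, y)) := by
  obtain ⟨c, hc⟩ := h₀
  -- Convexity along the segment from `x` to its reflection through `x₀` bounds `f (x, y)` below.
  refine ⟨2 * c - f ((2 : ℝ) • x₀ - x, 0), ?_⟩
  rintro _ ⟨y, rfl⟩
  have midpoint : (1 / 2 : ℝ) • (x, y) + (1 / 2 : ℝ) • ((2 : ℝ) • x₀ - x, (0 : F)) =
      (x₀, (1 / 2 : ℝ) • y) := by
    ext
    · simp only [Prod.smul_mk, Prod.mk_add_mk]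
      module
    · simp
  have hconv := hf.2 (Set.mem_univ (x, y)) (Set.mem_univ ((2 : ℝ) • x₀ - x, (0 : F)))
    (by norm_num : (0 : ℝ) ≤ 1 / 2) (by norm_num : (0 : ℝ) ≤ 1 / 2) (by norm_num)
  rw [midpoint, smul_eq_mul, smul_eq_mul] at hconv
  have hlower : c ≤ f (x₀, (1 / 2 : ℝ) • y) := hc ⟨_, rfl⟩
  linarith

theorem convexOn_iInf_prodMk (hf : ConvexOn ℝ Set.univ f) :
    ConvexOn ℝ Set.univ fun x => ⨅ y, f (x, y) := by
  by_cases hbdd : ∃ x₀, BddBelow (Set.range fun y => f (x₀, y))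
  · obtain ⟨x₀, h₀⟩ := hbdd
    refine ⟨convex_univ, fun x₁ _ x₂ _ a b ha hb hab => ?_⟩
    simp only [smul_eq_mul, Real.mul_iInf_of_nonneg ha, Real.mul_iInf_of_nonneg hb]
    refine le_ciInf_add_ciInf fun y₁ y₂ => ?_
    exact (ciInf_le (bddBelow_range_prodMk_of_convexOn hf h₀ _) (a • y₁ + b • y₂)).trans
      (hf.2 (Set.mem_univ (x₁, y₁)) (Set.mem_univ (x₂, y₂)) ha hb hab)
  · simp only [Real.iInf_of_not_bddBelow (not_exists.1 hbdd _)]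
    exact convexOn_const 0 convex_univ

end PartialInfimum

theorem convexOn_iSup_of_bddAbove {ι E : Type*} [AddCommMonoid E] [Module ℝ E] {s : Set E}
    {f : ι → E → ℝ} (hs : Convex ℝ s) (hf : ∀ i, ConvexOn ℝ s (f i))
    (hbdd : ∀ x ∈ s, BddAbove (Set.range fun i => f i x)) :
    ConvexOn ℝ s fun x => ⨆ i, f i x := by
  cases isEmpty_or_nonempty ι
  · simpa only [Real.iSup_of_isEmpty] using convexOn_const 0 hs
  · refine ⟨hs, fun x hx y hy a b ha hb hab => ciSup_le fun i => ?_⟩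
    calc f i (a • x + b • y) ≤ a • f i x + b • f i y := (hf i).2 hx hy ha hb hab
      _ ≤ a • (⨆ i, f i x) + b • ⨆ i, f i y := by
        gcongr
        · exact le_ciSup (hbdd x hx) i
        · exact le_ciSup (hbdd y hy) i

section LogIntegralExp

variable {α : Type*} [MeasurableSpace α] {μ : Measure α} {f : α → ℝ}

theorem convex_setOf_integrable_exp :
    Convex ℝ {f : α → ℝ | Integrable (fun a => Real.exp (f a)) μ} := by
  intro f hf g hg s t hs ht hst
  have hf_meas := Real.aemeasurable_of_aemeasurable_exp hf.1.aemeasurable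
  have hg_meas := Real.aemeasurable_of_aemeasurable_exp hg.1.aemeasurable
  refine ((hf.const_mul s).add (hg.const_mul t)).mono'
    (Real.measurable_exp.comp_aemeasurable
      ((hf_meas.const_mul s).add (hg_meas.const_mul t))).aestronglyMeasurable
    (ae_of_all _ fun a => ?_)
  rw [Real.norm_eq_abs, Real.abs_exp]
  exact convexOn_exp.2 (Set.mem_univ (f a)) (Set.mem_univ (g a)) hs ht hst

theorem convexOn_integral_exp :
    ConvexOn ℝ {f : α → ℝ | Integrable (fun a => Real.exp (f a)) μ}
      fun f => ∫ a, Real.exp (f a) ∂μ :=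
  integral_convexOn_of_integrand_ae convex_setOf_integrable_exp
    (ae_of_all _ fun a => (convexOn_exp.comp_linearMap (LinearMap.proj a)).subset
      (Set.subset_univ _) convex_setOf_integrable_exp)
    fun _ hf => hf

theorem integral_exp_sub_log_integral_exp [NeZero μ]
    (hf : Integrable (fun a => Real.exp (f a)) μ) :
    ∫ a, Real.exp (f a - Real.log (∫ b, Real.exp (f b) ∂μ)) ∂μ = 1 := by
  have hpos := integral_exp_pos hf
  simp_rw [Real.exp_sub, Real.exp_log hpos, integral_div]
  exact div_self hpos.ne'

theorem convexOn_log_integral_exp [NeZero μ] :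
    ConvexOn ℝ {f : α → ℝ | Integrable (fun a => Real.exp (f a)) μ}
      fun f => Real.log (∫ a, Real.exp (f a) ∂μ) := by
  refine ⟨convex_setOf_integrable_exp, fun f hf g hg s t hs ht hst => ?_⟩
  have hfg := convex_setOf_integrable_exp hf hg hs ht hst
  -- Shifting `f` and `g` by constants reduces to `∫ exp f = ∫ exp g = 1`, where convexity of
  -- `∫ exp` gives `∫ exp ≤ 1` on the segment between them.
  set A := Real.log (∫ a, Real.exp (f a) ∂μ) with hA
  set B := Real.log (∫ a, Real.exp (g a) ∂μ) with hB
  have integrable_shift {h : α → ℝ} (c : ℝ) (hh : Integrable (fun a => Real.exp (h a)) μ) :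
      Integrable (fun a => Real.exp (h a - c)) μ := by
    simpa only [Real.exp_sub] using hh.div_const _
  have normalized : ∫ a, Real.exp (s * (f a - A) + t * (g a - B)) ∂μ ≤ 1 := by
    have h := convexOn_integral_exp.2 (integrable_shift A hf) (integrable_shift B hg) hs ht hst
    simpa [hA, hB, integral_exp_sub_log_integral_exp hf, integral_exp_sub_log_integral_exp hg,
      hst] using h
  rw [Real.log_le_iff_le_exp (integral_exp_pos hfg)]
  calc ∫ a, Real.exp ((s • f + t • g) a) ∂μ
      = Real.exp (s * A + t * B) * ∫ a, Real.exp (s * (f a - A) + t * (g a - B)) ∂μ := by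
        rw [← integral_const_mul]
        congr! 2
        rw [← Real.exp_add]
        congr 1
        simp only [Pi.add_apply, Pi.smul_apply, smul_eq_mul]
        ring
    _ ≤ Real.exp (s • A + t • B) := mul_le_of_le_one_right (Real.exp_pos _).le normalized

variable [IsFiniteMeasure μ] {C : ℝ}

theorem integrable_exp_of_abs_le (hf : AEMeasurable f μ) (hC : ∀ᵐ a ∂μ, |f a| ≤ C) :
    Integrable (fun a => Real.exp (f a)) μ := by
  simpa only [one_mul] using ProbabilityTheory.integrable_exp_mul_of_mem_Icc (t := 1) hf
    (hC.mono fun _ ha => abs_le.1 ha)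

theorem abs_log_integral_exp_le [NeZero μ] (hf : AEMeasurable f μ) (hC : ∀ᵐ a ∂μ, |f a| ≤ C) :
    |Real.log (∫ a, Real.exp (f a) ∂μ)| ≤ |Real.log (μ.real Set.univ)| + C := by
  have hint := integrable_exp_of_abs_le hf hC
  have hpos := integral_exp_pos hint
  have hmass : 0 < μ.real Set.univ := measureReal_univ_pos
  have log_mass_mul (c : ℝ) :
      Real.log (∫ _ : α, Real.exp c ∂μ) = Real.log (μ.real Set.univ) + c := by
    rw [integral_const, smul_eq_mul, Real.log_mul hmass.ne' (Real.exp_pos c).ne', Real.log_exp]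
  have lower : Real.log (μ.real Set.univ) + -C ≤ Real.log (∫ a, Real.exp (f a) ∂μ) := by
    rw [← log_mass_mul]
    refine Real.log_le_log (integral_exp_pos (integrable_const _)) ?_
    exact integral_mono_ae (integrable_const _) hint <| hC.mono fun _ ha =>
      Real.exp_le_exp.2 (neg_le_of_abs_le ha)
  have upper : Real.log (∫ a, Real.exp (f a) ∂μ) ≤ Real.log (μ.real Set.univ) + C := by
    rw [← log_mass_mul]
    refine Real.log_le_log hpos ?_
    exact integral_mono_ae hint (integrable_const _) <| hC.mono fun _ ha =>
      Real.exp_le_exp.2 (le_of_abs_le ha)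
  have h₁ := neg_abs_le (Real.log (μ.real Set.univ))
  have h₂ := le_abs_self (Real.log (μ.real Set.univ))
  exact abs_le.2 ⟨by linarith, by linarith⟩

end LogIntegralExp

/-- The logarithm of the transfer operator `B_1` in exponential coordinates:
`logTransfer τ μ w = log (B_1 (exp w))`, so that
`logTransfer τ μ (φ + u) = log (B_{exp φ} (exp u))`. -/
noncomputable def logTransfer [TopologicalSpace X] [MeasurableSpace Θ] (τ : Θ → X → X)
    (μ : Measure Θ) (w : C(X, ℝ)) (x : X) : ℝ :=
  Real.log (∫ θ, Real.exp (w (τ θ x)) ∂μ)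

/-- The free energy `inf_{g > 0} ∫ log (B_{exp φ}(g) / g) dν` of `ν` at the potential `φ`, whose
supremum over the marginals of holonomic measures is the pressure. The infimum is taken over
`u = log g`, an arbitrary continuous function; if it is `-∞`, the value is `0`. -/
noncomputable def freeEnergy [TopologicalSpace X] [MeasurableSpace X] [MeasurableSpace Θ]
    (τ : Θ → X → X) (μ : Measure Θ) (ν : Measure X) (φ : C(X, ℝ)) : ℝ :=
  ⨅ u : C(X, ℝ), ∫ x, (logTransfer τ μ (φ + u) x - u x) ∂ν

section Transfer

variable [TopologicalSpace X] [MeasurableSpace X] [OpensMeasurableSpace X] [MeasurableSpace Θ]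
  {τ : Θ → X → X} {μ : Measure Θ}

theorem measurable_logTransfer [SFinite μ] (hτ : Measurable fun p : Θ × X => τ p.1 p.2)
    (w : C(X, ℝ)) : Measurable (logTransfer τ μ w) := by
  have hexp : Measurable fun p : Θ × X => Real.exp (w (τ p.1 p.2)) :=
    Real.measurable_exp.comp (w.measurable.comp hτ)
  exact Real.measurable_log.comp hexp.stronglyMeasurable.integral_prod_left'.measurable

variable [CompactSpace X] [IsFiniteMeasure μ]

theorem integrable_exp_comp_apply {x : X} (hτ : Measurable fun θ => τ θ x) (w : C(X, ℝ)) :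
    Integrable (fun θ => Real.exp (w (τ θ x))) μ :=
  integrable_exp_of_abs_le (w.measurable.comp hτ).aemeasurable
    (ae_of_all _ fun _ => w.norm_coe_le_norm _)

variable [NeZero μ]

theorem abs_logTransfer_le {x : X} (hτ : Measurable fun θ => τ θ x) (w : C(X, ℝ)) :
    |logTransfer τ μ w x| ≤ |Real.log (μ.real Set.univ)| + ‖w‖ :=
  abs_log_integral_exp_le (w.measurable.comp hτ).aemeasurable
    (ae_of_all _ fun _ => w.norm_coe_le_norm _)

theorem convexOn_logTransfer {x : X} (hτ : Measurable fun θ => τ θ x) :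
    ConvexOn ℝ Set.univ fun w : C(X, ℝ) => logTransfer τ μ w x :=
  (convexOn_log_integral_exp.comp_linearMap
    (LinearMap.funLeft ℝ ℝ (τ · x) ∘ₗ ContinuousMap.coeFnLinearMap ℝ)).subset
    (fun w _ => integrable_exp_comp_apply hτ w) convex_univ

theorem integrable_logTransfer_sub {ν : Measure X} [IsFiniteMeasure ν]
    (hτ : Measurable fun p : Θ × X => τ p.1 p.2) (w u : C(X, ℝ)) :
    Integrable (fun x => logTransfer τ μ w x - u x) ν :=
  (Integrable.of_bound (measurable_logTransfer hτ w).aestronglyMeasurable _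
    (ae_of_all _ fun _ => abs_logTransfer_le hτ.of_uncurry_right w)).sub
  (Integrable.of_bound u.measurable.aestronglyMeasurable _ (ae_of_all _ u.norm_coe_le_norm))

theorem convexOn_integral_logTransfer_sub {ν : Measure X} [IsFiniteMeasure ν]
    (hτ : Measurable fun p : Θ × X => τ p.1 p.2) :
    ConvexOn ℝ Set.univ fun p : C(X, ℝ) × C(X, ℝ) =>
      ∫ x, (logTransfer τ μ (p.1 + p.2) x - p.2 x) ∂ν := by
  refine integral_convexOn_of_integrand_ae convex_univ (ae_of_all _ fun x => ?_)
    fun p _ => integrable_logTransfer_sub hτ _ _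
  have hlog := (convexOn_logTransfer (μ := μ) (hτ.of_uncurry_right (y := x))).comp_linearMap
    (LinearMap.fst ℝ C(X, ℝ) C(X, ℝ) + LinearMap.snd ℝ C(X, ℝ) C(X, ℝ))
  have heval : ConcaveOn ℝ Set.univ fun p : C(X, ℝ) × C(X, ℝ) => p.2 x :=
    (LinearMap.proj x ∘ₗ ContinuousMap.coeFnLinearMap ℝ ∘ₗ
      LinearMap.snd ℝ C(X, ℝ) C(X, ℝ)).concaveOn convex_univ
  exact hlog.sub heval

theorem convexOn_freeEnergy {ν : Measure X} [IsFiniteMeasure ν]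
    (hτ : Measurable fun p : Θ × X => τ p.1 p.2) :
    ConvexOn ℝ Set.univ (freeEnergy τ μ ν) :=
  convexOn_iInf_prodMk (convexOn_integral_logTransfer_sub hτ)

theorem freeEnergy_le {ν : Measure X} [IsProbabilityMeasure ν]
    (hτ : ∀ x, Measurable fun θ => τ θ x) (φ : C(X, ℝ)) :
    freeEnergy τ μ ν φ ≤ |Real.log (μ.real Set.univ)| + ‖φ‖ := by
  by_cases hbdd : BddBelow (Set.range fun u : C(X, ℝ) =>
      ∫ x, (logTransfer τ μ (φ + u) x - u x) ∂ν)
  · calc freeEnergy τ μ ν φ ≤ ∫ x, logTransfer τ μ φ x ∂ν := by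
          simpa [freeEnergy] using ciInf_le hbdd 0
      _ ≤ |Real.log (μ.real Set.univ)| + ‖φ‖ := by
          refine (le_abs_self _).trans ?_
          simpa using norm_integral_le_of_norm_le_const (μ := ν) (f := logTransfer τ μ φ)
            (ae_of_all _ fun x => abs_logTransfer_le (hτ x) φ)
  · rw [freeEnergy, Real.iInf_of_not_bddBelow hbdd]
    positivity

theorem log_transfer_div_eq {x : X} (hτ : Measurable fun θ => τ θ x) {g u : C(X, ℝ)}
    (hgu : ∀ y, g y = Real.exp (u y)) (φ : C(X, ℝ)) :
    Real.log ((∫ θ, g (τ θ x) * Real.exp (φ (τ θ x)) ∂μ) / g x) =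
      logTransfer τ μ (φ + u) x - u x := by
  have hint : ∫ θ, g (τ θ x) * Real.exp (φ (τ θ x)) ∂μ =
      ∫ θ, Real.exp ((φ + u) (τ θ x)) ∂μ := by
    simp only [hgu, ContinuousMap.add_apply, Real.exp_add, mul_comm]
  rw [hint, hgu, Real.log_div (integral_exp_pos (integrable_exp_comp_apply hτ _)).ne'
    (Real.exp_pos _).ne', Real.log_exp, logTransfer]

theorem sInf_integral_log_transfer_div_eq_freeEnergy (hτ : ∀ x, Measurable fun θ => τ θ x)
    (ν : Measure X) (φ : C(X, ℝ)) :
    sInf {s : ℝ | ∃ g : C(X, ℝ), (∀ x, 0 < g x) ∧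
      s = ∫ x, Real.log ((∫ θ, g (τ θ x) * Real.exp (φ (τ θ x)) ∂μ) / g x) ∂ν} =
    freeEnergy τ μ ν φ := by
  refine congrArg sInf (Set.ext fun s => ⟨?_, ?_⟩)
  · rintro ⟨g, hg, rfl⟩
    refine ⟨⟨fun x => Real.log (g x), g.continuous.log fun x => (hg x).ne'⟩, ?_⟩
    exact integral_congr_ae (ae_of_all _ fun x =>
      (log_transfer_div_eq (hτ x) (fun y => (Real.exp_log (hg y)).symm) φ).symm)
  · rintro ⟨u, rfl⟩
    refine ⟨⟨fun x => Real.exp (u x), by fun_prop⟩, fun x => Real.exp_pos _, ?_⟩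
    exact integral_congr_ae (ae_of_all _ fun x =>
      (log_transfer_div_eq (hτ x) (fun _ => rfl) φ).symm)

theorem pressure_exp_eq_iSup_freeEnergy [TopologicalSpace Θ]
    (hτ : ∀ x, Measurable fun θ => τ θ x) (φ : C(X, ℝ)) :
    pressure τ μ (fun x => Real.exp (φ x)) =
      ⨆ νhat : {νhat : Measure (X × Θ) // IsProbabilityMeasure νhat ∧ Holonomic τ νhat},
        freeEnergy τ μ (νhat.1.map Prod.fst) φ := by
  simp only [pressure, sInf_integral_log_transfer_div_eq_freeEnergy hτ]
  refine congrArg sSup (Set.ext fun r => ?_)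
  simp only [Set.mem_ofPred_eq, Set.mem_range, Subtype.exists, exists_prop, and_assoc, eq_comm]

theorem pressure_functional_convex_general [TopologicalSpace Θ]
    (hτ : Measurable fun p : Θ × X => τ p.1 p.2) :
    ConvexOn ℝ Set.univ fun φ : C(X, ℝ) => pressure τ μ fun x => Real.exp (φ x) := by
  have hτ_slice (x : X) : Measurable fun θ => τ θ x := hτ.of_uncurry_right
  simp only [pressure_exp_eq_iSup_freeEnergy hτ_slice]
  have marginal (νhat : {νhat : Measure (X × Θ) // IsProbabilityMeasure νhat ∧ Holonomic τ νhat}) :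
      IsProbabilityMeasure (νhat.1.map Prod.fst) :=
    haveI := νhat.2.1
    Measure.isProbabilityMeasure_map measurable_fst.aemeasurable
  refine convexOn_iSup_of_bddAbove convex_univ (fun νhat => convexOn_freeEnergy hτ)
    fun φ _ => ⟨|Real.log (μ.real Set.univ)| + ‖φ‖, ?_⟩
  rintro _ ⟨νhat, rfl⟩
  exact freeEnergy_le hτ_slice φ

end Transfer

/-- the pressure functional `p(φ) = P(exp φ)` on `C(X,ℝ)` is convex. -/
theorem pressure_functional_convex
    [MetricSpace X] [CompactSpace X] [MeasurableSpace X] [BorelSpace X] [Nonempty X]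
    [MetricSpace Θ] [CompactSpace Θ] [MeasurableSpace Θ] [BorelSpace Θ] [Nonempty Θ]
    (τ : Θ → X → X) (hτ : Continuous fun p : Θ × X => τ p.1 p.2)
    (μ : Measure Θ) [IsProbabilityMeasure μ]
    (φ₁ φ₂ : C(X, ℝ)) (t : ℝ) (ht0 : 0 ≤ t) (ht1 : t ≤ 1) :
    pressure τ μ (fun x => Real.exp (t * φ₁ x + (1 - t) * φ₂ x)) ≤
      t * pressure τ μ (fun x => Real.exp (φ₁ x)) +
        (1 - t) * pressure τ μ (fun x => Real.exp (φ₂ x)) :=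
  (pressure_functional_convex_general hτ.measurable).2 (Set.mem_univ φ₁) (Set.mem_univ φ₂)
    ht0 (sub_nonneg.2 ht1) (add_sub_cancel t 1)
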